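/- arXiv:1407.8421 — 2 statements merged into one kernel-verified Lean document; each statement's English description precedes it below -/
import Mathlib

section
/- For every real c > 0 there exists s₀ such that for all integers s ≥ s₀ and all integers r with 2s < r < 2s + c·√s, the function B_{r,s}(p) − 2p + 1 is strictly positive for all p ∈ [0,1). (Consequently the least r for which B_{r,s}(p) − 2p + 1 has a root in (0,1) satisfies r(s) ≥ 2s + c√s for all sufficiently large s, i.e. (r(s) − 2s)/√s → ∞.) -/
/-- `B r s p = ∑_{i=0}^{s-1} C(r,i) p^{r-i} (1-p)^i`, the probability that a
Binomial(r,p) random variable exceeds `r - s`. -/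
noncomputable def B (r s : ℕ) (p : ℝ) : ℝ :=
  ∑ i ∈ Finset.range s, (r.choose i : ℝ) * p ^ (r - i) * (1 - p) ^ i

/-!
Let `X` be the number of failures in `r = 2s + d` trials of success probability `p ≥ 1/2`, where
`d ≤ c√s`, so that `B r s p = P(X < s)`.

Near `p = 1/2` it suffices that `P(X < s)` is bounded below by some `δ > 0` independent of `s`: the
Paley–Zygmund inequality for `(1 + u) ^ (r - X)` gives this, since with `u` a suitable multiple of
`1/√s` the event `s ≤ X` forces the variable below half its mean, while its second moment is only a
constant times its squared mean.

Once `2p - 1 ≥ δ`, the Chernoff bound `P(s ≤ X) ≤ (4p(1-p))^s (2p)^d` is exponentially small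
in `s`. Near `p = 1` it has to be compared with `2(1-p)`, and one of the `s` factors `4p(1-p)`
supplies exactly this.
-/

open Filter Finset Real

/-- The probability of exactly `i` failures in `r` independent trials of success probability `p`.
Failures are counted, rather than successes, so that `B` is a sum over an initial segment. -/
noncomputable def failureWeight (r : ℕ) (p : ℝ) (i : ℕ) : ℝ :=
  (r.choose i : ℝ) * p ^ (r - i) * (1 - p) ^ i

theorem B_eq_sum_failureWeight (r s : ℕ) (p : ℝ) :
    B r s p = ∑ i ∈ range s, failureWeight r p i :=
  rfl

theorem sum_failureWeight_mul_pow (r : ℕ) (p y : ℝ) :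
    ∑ i ∈ range (r + 1), failureWeight r p i * y ^ (r - i) = (1 - p + p * y) ^ r := by
  rw [add_pow]
  refine sum_congr rfl fun i _ => ?_
  rw [failureWeight, mul_pow]
  ring

theorem sum_failureWeight (r : ℕ) (p : ℝ) : ∑ i ∈ range (r + 1), failureWeight r p i = 1 := by
  simpa using sum_failureWeight_mul_pow r p 1

theorem B_add_sum_Ico_failureWeight {r s : ℕ} (hs : s ≤ r) (p : ℝ) :
    B r s p + ∑ i ∈ Ico s (r + 1), failureWeight r p i = 1 := by
  rw [B_eq_sum_failureWeight, sum_range_add_sum_Ico _ (by lia), sum_failureWeight]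

theorem failureWeight_nonneg {p : ℝ} (hp₀ : 0 ≤ p) (hp₁ : p ≤ 1) (r i : ℕ) :
    0 ≤ failureWeight r p i :=
  mul_nonneg (mul_nonneg (Nat.cast_nonneg _) (pow_nonneg hp₀ _)) (pow_nonneg (sub_nonneg.2 hp₁) _)

theorem B_nonneg {p : ℝ} (hp₀ : 0 ≤ p) (hp₁ : p ≤ 1) (r s : ℕ) : 0 ≤ B r s p :=
  sum_nonneg fun i _ => failureWeight_nonneg hp₀ hp₁ r i

theorem paley_zygmund_sum {ι : Type*} {S A : Finset ι} {w f : ι → ℝ} {t : ℝ}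
    (hAS : A ⊆ S) (hw : ∀ i ∈ S, 0 ≤ w i) (hw_sum : ∑ i ∈ S, w i ≤ 1)
    (ht : 0 ≤ t) (ht_mean : t ≤ ∑ i ∈ S, w i * f i) (hf : ∀ i ∈ S, i ∉ A → f i ≤ t) :
    (∑ i ∈ S, w i * f i - t) ^ 2 ≤ (∑ i ∈ A, w i) * ∑ i ∈ S, w i * f i ^ 2 := by
  classical
  have hw_sdiff : ∑ i ∈ S \ A, w i ≤ 1 :=
    (sum_le_sum_of_subset_of_nonneg sdiff_subset fun i hi _ => hw i hi).trans hw_sum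
  have h_sdiff : ∑ i ∈ S \ A, w i * f i ≤ t :=
    calc ∑ i ∈ S \ A, w i * f i
        ≤ ∑ i ∈ S \ A, w i * t := sum_le_sum fun i hi =>
          have hi := mem_sdiff.1 hi
          mul_le_mul_of_nonneg_left (hf i hi.1 hi.2) (hw i hi.1)
      _ = (∑ i ∈ S \ A, w i) * t := (sum_mul ..).symm
      _ ≤ t := mul_le_of_le_one_left ht hw_sdiff
  have h_excess : ∑ i ∈ S, w i * f i - t ≤ ∑ i ∈ A, w i * f i := by
    rw [← sum_sdiff hAS]
    linarith
  have h_sq_nonneg : ∀ i ∈ S, 0 ≤ w i * f i ^ 2 := fun i hi => mul_nonneg (hw i hi) (sq_nonneg _)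
  calc (∑ i ∈ S, w i * f i - t) ^ 2
      ≤ (∑ i ∈ A, w i * f i) ^ 2 := pow_le_pow_left₀ (sub_nonneg.2 ht_mean) h_excess 2
    _ ≤ (∑ i ∈ A, w i) * ∑ i ∈ A, w i * f i ^ 2 :=
        sum_sq_le_sum_mul_sum_of_sq_le_mul A (fun i hi => hw i (hAS hi))
          (fun i hi => h_sq_nonneg i (hAS hi)) fun i _ => le_of_eq (by ring)
    _ ≤ (∑ i ∈ A, w i) * ∑ i ∈ S, w i * f i ^ 2 :=
        mul_le_mul_of_nonneg_left
          (sum_le_sum_of_subset_of_nonneg hAS fun i hi _ => h_sq_nonneg i hi)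
          (sum_nonneg fun i hi => hw i (hAS hi))

theorem one_sub_add_mul_sq_le_sq_mul_exp {p u : ℝ} (hp : 0 ≤ p) (hu : 0 ≤ u) :
    1 - p + p * (1 + u) ^ 2 ≤ (1 + p * u) ^ 2 * exp (u ^ 2 / 4) := by
  have h_variance : p * (1 - p) ≤ 1 / 4 := by linarith [sq_nonneg (p - 1 / 2)]
  have h_one_le : 1 ≤ (1 + p * u) ^ 2 := one_le_pow₀ (by linarith [mul_nonneg hp hu])
  calc 1 - p + p * (1 + u) ^ 2
      = (1 + p * u) ^ 2 + p * (1 - p) * u ^ 2 := by ring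
    _ ≤ (1 + p * u) ^ 2 + 1 / 4 * u ^ 2 := by gcongr
    _ ≤ (1 + p * u) ^ 2 + (1 + p * u) ^ 2 * (u ^ 2 / 4) := by
        linarith [le_mul_of_one_le_left (by positivity : 0 ≤ u ^ 2 / 4) h_one_le]
    _ = (1 + p * u) ^ 2 * (u ^ 2 / 4 + 1) := by ring
    _ ≤ (1 + p * u) ^ 2 * exp (u ^ 2 / 4) := by gcongr; exact add_one_le_exp _

theorem sum_failureWeight_mul_sq_pow_le {p u : ℝ} (hp₀ : 0 ≤ p) (hp₁ : p ≤ 1) (hu : 0 ≤ u)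
    (r : ℕ) :
    ∑ i ∈ range (r + 1), failureWeight r p i * ((1 + u) ^ (r - i)) ^ 2
      ≤ ((1 + p * u) ^ r) ^ 2 * exp (r * (u ^ 2 / 4)) := by
  have h_base_nonneg : 0 ≤ 1 - p + p * (1 + u) ^ 2 :=
    add_nonneg (sub_nonneg.2 hp₁) (by positivity)
  simp only [pow_right_comm (1 + u) _ 2, sum_failureWeight_mul_pow]
  rw [exp_nat_mul, pow_right_comm, ← mul_pow]
  exact pow_le_pow_left₀ h_base_nonneg (one_sub_add_mul_sq_le_sq_mul_exp hp₀ hu) r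

theorem one_fourth_le_B_mul_exp {r s : ℕ} {p u : ℝ} (hs : s ≤ r) (hp₀ : 0 ≤ p) (hp₁ : p ≤ 1)
    (hu : 0 ≤ u) (h : 2 * (1 + u) ^ (r - s) ≤ (1 + p * u) ^ r) :
    1 / 4 ≤ B r s p * exp (r * (u ^ 2 / 4)) := by
  set M := (1 + p * u) ^ r with hM
  have hM_pos : 0 < M := by positivity
  have h_mean : ∑ i ∈ range (r + 1), failureWeight r p i * (1 + u) ^ (r - i) = M := by
    rw [sum_failureWeight_mul_pow, hM]
    ring
  have h_second : ∑ i ∈ range (r + 1), failureWeight r p i * ((1 + u) ^ (r - i)) ^ 2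
      ≤ M ^ 2 * exp (r * (u ^ 2 / 4)) :=
    sum_failureWeight_mul_sq_pow_le hp₀ hp₁ hu r
  have h_threshold : ∀ i ∈ range (r + 1), i ∉ range s → (1 + u) ^ (r - i) ≤ (1 + u) ^ (r - s) :=
    fun i _ hi => pow_le_pow_right₀ (by linarith) (by rw [mem_range] at hi; lia)
  have h_threshold_nonneg : 0 ≤ (1 + u) ^ (r - s) := by positivity
  have h_paley_zygmund : (M - (1 + u) ^ (r - s)) ^ 2
      ≤ B r s p * ∑ i ∈ range (r + 1), failureWeight r p i * ((1 + u) ^ (r - i)) ^ 2 := by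
    rw [← h_mean]
    exact paley_zygmund_sum (range_subset_range.2 (by lia))
      (fun i _ => failureWeight_nonneg hp₀ hp₁ r i) (sum_failureWeight r p).le h_threshold_nonneg
      (by linarith) h_threshold
  refine le_of_mul_le_mul_left ?_ (pow_pos hM_pos 2)
  calc M ^ 2 * (1 / 4)
      = (M / 2) ^ 2 := by ring
    _ ≤ (M - (1 + u) ^ (r - s)) ^ 2 := pow_le_pow_left₀ (by positivity) (by linarith) 2
    _ ≤ B r s p * (M ^ 2 * exp (r * (u ^ 2 / 4))) :=
        h_paley_zygmund.trans (mul_le_mul_of_nonneg_left h_second (B_nonneg hp₀ hp₁ r s))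
    _ = M ^ 2 * (B r s p * exp (r * (u ^ 2 / 4))) := by ring

theorem one_add_le_sq_mul_exp_neg {u : ℝ} (hu₀ : 0 ≤ u) (hu₁ : u ≤ 1) :
    1 + u ≤ (1 + u / 2) ^ 2 * exp (-(u ^ 2 / 9)) := by
  have h_ratio : u / 3 ≤ u / (2 + u) := by gcongr; linarith
  calc 1 + u
      = (1 + u / 2) ^ 2 * (1 - (u / (2 + u)) ^ 2) := by field_simp; ring
    _ ≤ (1 + u / 2) ^ 2 * (1 - (u / 3) ^ 2) := by gcongr
    _ = (1 + u / 2) ^ 2 * (1 - u ^ 2 / 9) := by ring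
    _ ≤ (1 + u / 2) ^ 2 * exp (-(u ^ 2 / 9)) := by gcongr; exact one_sub_le_exp_neg _

theorem two_mul_one_add_pow_le {s d : ℕ} {u : ℝ} (hu₀ : 0 ≤ u) (hu₁ : u ≤ 1)
    (h : 1 + d * u ≤ s * (u ^ 2 / 9)) :
    2 * (1 + u) ^ (s + d) ≤ (1 + u / 2) ^ (2 * s + d) := by
  have h_two : (2 : ℝ) ≤ exp 1 := by linarith [add_one_le_exp 1]
  have h_pow_s : (1 + u) ^ s ≤ (1 + u / 2) ^ (2 * s) * exp (-(s * (u ^ 2 / 9))) := by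
    rw [← mul_neg, exp_nat_mul, pow_mul, ← mul_pow]
    exact pow_le_pow_left₀ (by positivity) (one_add_le_sq_mul_exp_neg hu₀ hu₁) s
  have h_pow_d : (1 + u) ^ d ≤ exp (d * u) := by
    rw [exp_nat_mul]
    exact pow_le_pow_left₀ (by positivity) (by linarith [add_one_le_exp u]) d
  calc 2 * (1 + u) ^ (s + d)
      = 2 * (1 + u) ^ s * (1 + u) ^ d := by ring
    _ ≤ exp 1 * ((1 + u / 2) ^ (2 * s) * exp (-(s * (u ^ 2 / 9)))) * exp (d * u) := by gcongr
    _ = (1 + u / 2) ^ (2 * s) * exp (1 + d * u - s * (u ^ 2 / 9)) := by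
        rw [sub_eq_add_neg, exp_add, exp_add]
        ring
    _ ≤ (1 + u / 2) ^ (2 * s) * 1 := by gcongr; exact exp_le_one_iff.2 (by linarith)
    _ ≤ (1 + u / 2) ^ (2 * s) * (1 + u / 2) ^ d := by gcongr; exact one_le_pow₀ (by linarith)
    _ = (1 + u / 2) ^ (2 * s + d) := (pow_add ..).symm

theorem one_fourth_le_B_two_mul_add_mul_exp {s d : ℕ} {p u : ℝ} (hp : 1 / 2 ≤ p) (hp₁ : p ≤ 1)
    (hu₀ : 0 ≤ u) (hu₁ : u ≤ 1) (hd : (d : ℝ) ≤ 2 * s) (h : 1 + d * u ≤ s * (u ^ 2 / 9)) :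
    1 / 4 ≤ B (2 * s + d) s p * exp (s * u ^ 2) := by
  have hp₀ : 0 ≤ p := one_half_pos.le.trans hp
  have h_half_mul : u / 2 ≤ p * u := by linarith [mul_le_mul_of_nonneg_right hp hu₀]
  have h_pow : 2 * (1 + u) ^ (2 * s + d - s) ≤ (1 + p * u) ^ (2 * s + d) :=
    calc 2 * (1 + u) ^ (2 * s + d - s)
        = 2 * (1 + u) ^ (s + d) := by congr 2; lia
      _ ≤ (1 + u / 2) ^ (2 * s + d) := two_mul_one_add_pow_le hu₀ hu₁ h
      _ ≤ (1 + p * u) ^ (2 * s + d) := by gcongr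
  have h_exponent : ((2 * s + d : ℕ) : ℝ) * (u ^ 2 / 4) ≤ s * u ^ 2 :=
    calc ((2 * s + d : ℕ) : ℝ) * (u ^ 2 / 4)
        = (2 * s + d) * (u ^ 2 / 4) := by push_cast; rfl
      _ ≤ (2 * s + 2 * s) * (u ^ 2 / 4) := by gcongr
      _ = s * u ^ 2 := by ring
  exact (one_fourth_le_B_mul_exp (by lia) hp₀ hp₁ hu₀ h_pow).trans
    (mul_le_mul_of_nonneg_left (exp_le_exp.2 h_exponent) (B_nonneg hp₀ hp₁ _ _))

theorem tendsto_sqrt_natCast_atTop : Tendsto (fun n : ℕ => √(n : ℝ)) atTop atTop :=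
  tendsto_sqrt_atTop.comp tendsto_natCast_atTop_atTop

theorem exists_pos_eventually_le_B {c : ℝ} (hc : 0 ≤ c) :
    ∃ δ > 0, ∀ᶠ s : ℕ in atTop, ∀ d : ℕ, d ≤ c * √s → ∀ p, 1 / 2 ≤ p → p ≤ 1 →
      δ ≤ B (2 * s + d) s p := by
  set a : ℝ := 9 * (c + 1) with ha
  have ha_pos : 0 < a := by positivity
  refine ⟨exp (-a ^ 2) / 4, by positivity, ?_⟩
  filter_upwards [tendsto_sqrt_natCast_atTop.eventually_ge_atTop a] with s has d hd p hp hp₁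
  have hs_pos : 0 < √(s : ℝ) := ha_pos.trans_le has
  have hs_sq : √(s : ℝ) ^ 2 = s := sq_sqrt s.cast_nonneg
  set u : ℝ := a / √s with hu
  have hu₀ : 0 ≤ u := by positivity
  have hu₁ : u ≤ 1 := (div_le_one hs_pos).2 has
  have hu_mul : √s * u = a := by rw [hu]; field_simp
  have hsu : s * u ^ 2 = a ^ 2 := by rw [← hu_mul, mul_pow, hs_sq]
  have hdu : d * u ≤ c * a :=
    calc d * u ≤ c * √s * u := by gcongr
      _ = c * a := by rw [mul_assoc, hu_mul]
  have h_exponent : 1 + d * u ≤ s * (u ^ 2 / 9) :=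
    calc 1 + d * u ≤ a + c * a := by linarith
      _ = a ^ 2 / 9 := by rw [ha]; ring
      _ = s * (u ^ 2 / 9) := by rw [← hsu]; ring
  have hd_le : (d : ℝ) ≤ 2 * s :=
    calc (d : ℝ) ≤ c * √s := hd
      _ ≤ √s * √s := by gcongr; linarith
      _ = s := mul_self_sqrt s.cast_nonneg
      _ ≤ 2 * s := by linarith [s.cast_nonneg (α := ℝ)]
  have h_quarter : 1 / 4 ≤ B (2 * s + d) s p * exp (a ^ 2) := by
    rw [← hsu]
    exact one_fourth_le_B_two_mul_add_mul_exp hp hp₁ hu₀ hu₁ hd_le h_exponent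
  rw [exp_neg, div_le_iff₀ (by norm_num), inv_le_iff_one_le_mul₀ (exp_pos _)]
  linarith

theorem pow_sub_mul_pow_le_of_le {x y : ℝ} {r s i : ℕ} (hy : 0 ≤ y) (hyx : y ≤ x) (hsi : s ≤ i)
    (hir : i ≤ r) : x ^ (r - i) * y ^ i ≤ x ^ (r - s) * y ^ s := by
  have hx : 0 ≤ x := hy.trans hyx
  calc x ^ (r - i) * y ^ i
      = x ^ (r - i) * y ^ (i - s) * y ^ s := by rw [mul_assoc, pow_sub_mul_pow y hsi]
    _ ≤ x ^ (r - i) * x ^ (i - s) * y ^ s := by gcongr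
    _ = x ^ (r - s) * y ^ s := by rw [← pow_add, Nat.sub_add_sub_cancel hir hsi]

theorem one_sub_B_le {r s : ℕ} {p : ℝ} (hs : s ≤ r) (hp : 1 / 2 ≤ p) (hp₁ : p ≤ 1) :
    1 - B r s p ≤ 2 ^ r * (p ^ (r - s) * (1 - p) ^ s) := by
  have hq : 0 ≤ 1 - p := sub_nonneg.2 hp₁
  have h_term_nonneg : 0 ≤ p ^ (r - s) * (1 - p) ^ s :=
    mul_nonneg (pow_nonneg (one_half_pos.le.trans hp) _) (pow_nonneg hq _)
  calc 1 - B r s p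
      = ∑ i ∈ Ico s (r + 1), failureWeight r p i :=
        sub_eq_of_eq_add' (B_add_sum_Ico_failureWeight hs p).symm
    _ ≤ ∑ i ∈ Ico s (r + 1), (r.choose i : ℝ) * (p ^ (r - s) * (1 - p) ^ s) := by
        refine sum_le_sum fun i hi => ?_
        obtain ⟨hsi, hir⟩ := mem_Ico.1 hi
        rw [failureWeight, mul_assoc]
        gcongr ?_ * ?_
        exact pow_sub_mul_pow_le_of_le hq (by linarith) hsi (Nat.le_of_lt_succ hir)
    _ ≤ ∑ i ∈ range (r + 1), (r.choose i : ℝ) * (p ^ (r - s) * (1 - p) ^ s) :=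
        sum_le_sum_of_subset_of_nonneg (fun i hi => mem_range.2 (mem_Ico.1 hi).2)
          fun i _ _ => mul_nonneg (Nat.cast_nonneg _) h_term_nonneg
    _ = 2 ^ r * (p ^ (r - s) * (1 - p) ^ s) := by
        rw [← sum_mul]
        exact_mod_cast congrArg (fun n : ℕ => (n : ℝ) * (p ^ (r - s) * (1 - p) ^ s))
          (Nat.sum_range_choose r)

theorem eventually_mul_sqrt_add_one_lt (c : ℝ) {ε : ℝ} (hε : 0 < ε) :
    ∀ᶠ n : ℕ in atTop, c * √n + 1 < ε * (n - 1) := by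
  have h_tendsto : Tendsto (fun v : ℝ => v * (ε * v - c)) atTop atTop :=
    tendsto_id.atTop_mul_atTop₀
      (tendsto_atTop_add_const_right _ (-c) (tendsto_id.const_mul_atTop hε))
  filter_upwards [(h_tendsto.comp tendsto_sqrt_natCast_atTop).eventually_gt_atTop (1 + ε)]
    with n hn
  have h_sq : √(n : ℝ) * √n = n := mul_self_sqrt n.cast_nonneg
  simp only [Function.comp_apply] at hn
  linear_combination hn + ε * h_sq

theorem four_mul_pow_mul_two_mul_pow_lt_one {t d : ℕ} {p δ : ℝ} (hδ : 0 ≤ δ)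
    (hp : δ ≤ 2 * p - 1) (hp₁ : p ≤ 1) (h : d + 1 < δ ^ 2 * t) :
    (4 * p * (1 - p)) ^ t * (2 * p) ^ (d + 1) < 1 := by
  have hp₀ : 0 ≤ p := by linarith
  have h_variance : 4 * p * (1 - p) ≤ exp (-δ ^ 2) :=
    calc 4 * p * (1 - p) = 1 - (2 * p - 1) ^ 2 := by ring
      _ ≤ 1 - δ ^ 2 := by gcongr
      _ ≤ exp (-δ ^ 2) := one_sub_le_exp_neg _
  have h_two_mul : 2 * p ≤ exp 1 := by linarith [add_one_le_exp 1]
  calc (4 * p * (1 - p)) ^ t * (2 * p) ^ (d + 1)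
      ≤ exp (-δ ^ 2) ^ t * exp 1 ^ (d + 1) := by gcongr
    _ = exp (d + 1 - δ ^ 2 * t) := by
        rw [← exp_nat_mul, ← exp_nat_mul, ← exp_add]
        push_cast
        ring_nf
    _ < 1 := exp_lt_one_iff.2 (by linarith)

theorem eventually_one_sub_B_lt (c : ℝ) {δ : ℝ} (hδ : 0 < δ) :
    ∀ᶠ s : ℕ in atTop, ∀ d : ℕ, d ≤ c * √s → ∀ p, δ ≤ 2 * p - 1 → p < 1 →
      1 - B (2 * s + d) s p < 2 * (1 - p) := by
  filter_upwards [eventually_mul_sqrt_add_one_lt c (pow_pos hδ 2), eventually_ge_atTop 1]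
    with s hs hs₁ d hd p hp hp₁
  obtain ⟨t, rfl⟩ := Nat.exists_eq_add_of_le' hs₁
  have hdt : d + 1 < δ ^ 2 * t := by
    push_cast at hs hd
    linarith
  calc 1 - B (2 * (t + 1) + d) (t + 1) p
      ≤ 2 ^ (2 * (t + 1) + d) * (p ^ (2 * (t + 1) + d - (t + 1)) * (1 - p) ^ (t + 1)) :=
        one_sub_B_le (by lia) (by linarith) hp₁.le
    _ = 2 * (1 - p) * ((4 * p * (1 - p)) ^ t * (2 * p) ^ (d + 1)) := by
        rw [show 2 * (t + 1) + d - (t + 1) = t + (d + 1) by lia, show (4 : ℝ) = 2 ^ 2 by norm_num]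
        simp only [mul_pow, pow_add, pow_mul]
        ring
    _ < 2 * (1 - p) :=
        mul_lt_of_lt_one_right (by linarith)
          (four_mul_pow_mul_two_mul_pow_lt_one hδ.le hp hp₁.le hdt)

/-- For every real `c > 0` there exists `s₀` such that for all integers `s ≥ s₀`
and all integers `r` with `2s < r < 2s + c√s`, the function `B_{r,s}(p) - 2p + 1`
is strictly positive for all `p ∈ [0,1)`; consequently `(r(s) - 2s)/√s → ∞`. -/
theorem stmt_8 (c : ℝ) (hc : 0 < c) :
    ∃ s₀ : ℕ, ∀ s : ℕ, s₀ ≤ s → ∀ r : ℕ,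
      2 * s < r → (r : ℝ) < 2 * s + c * Real.sqrt s →
      ∀ p ∈ Set.Ico (0 : ℝ) 1, 0 < B r s p - 2 * p + 1 := by
  obtain ⟨δ, hδ, h_near⟩ := exists_pos_eventually_le_B hc.le
  obtain ⟨s₀, h⟩ := eventually_atTop.1 (h_near.and (eventually_one_sub_B_lt c hδ))
  refine ⟨s₀, fun s hs r hr hrc p ⟨hp₀, hp₁⟩ => ?_⟩
  obtain ⟨h_near, h_far⟩ := h s hs
  obtain ⟨d, rfl⟩ := Nat.exists_eq_add_of_le hr.le
  have hd : d ≤ c * √s := by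
    push_cast at hrc
    linarith
  rcases lt_or_ge p (1 / 2) with hp | hp
  · linarith [B_nonneg hp₀ hp₁.le (2 * s + d) s]
  rcases lt_or_ge (2 * p - 1) δ with hpδ | hpδ
  · linarith [h_near d hd p hp hp₁.le]
  · linarith [h_far d hd p hpδ hp₁]
end

section
/- Let (Ω, ℱ, P) be a probability space with a filtration (ℱ_m)_{m≥1}, and for each integer k ≥ 0 let (F_m(k))_{m≥1} be an adapted integer-valued process satisfying: F_m(0) = 0 and 0 ≤ F_m(k−1) ≤ F_m(k) ≤ 2m for all m and k ≥ 1; and for each k ≥ 1 and m ≥ 1, almost surely the conditional distribution of F_{m+1}(k) − F_m(k) given ℱ_m assigns probability 1 − B_{r,s}(F_m(k)/2m) to the value 1, probability B_{r,s}(F_m(k)/2m) − B_{r,s}(F_m(k−1)/2m) to the value 1−k, and probability B_{r,s}(F_m(k−1)/2m) to the value 2. Then for every ε > 0, every integer k ≥ 0 and every α < 1, there is a constant C such that for all m ≥ 1, P( |F_{m'}(k)/2m' − p_k| < ε for all m' ≥ m ) ≥ 1 − C·exp(−m^α). -/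
/-- `f k (x, p) = (k+1) B_{r,s}(p) - k B_{r,s}(x) - 2x + 1`. -/
noncomputable def f (r s k : ℕ) (x p : ℝ) : ℝ :=
  ((k : ℝ) + 1) * B r s p - (k : ℝ) * B r s x - 2 * x + 1


open MeasureTheory

/-!
Once level `k - 1` is close to its limit `p (k - 1)`, the sum `F m k` is a process with bounded
increments whose drift, as a function of the ratio `F m k / (2 * m)`, decreases and balances exactly
at `p k`. So the signed deviation `±(F m k - 2 * m * p k)` has drift at most a small multiple of `ε`
wherever it is nonnegative, outside an event that by induction on `k` has exponentially small
probability. Its moment generating function at a small parameter then satisfies a linear recursion,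
in which the bad event costs only a bounded term, and Chernoff's bound makes every deviation
exponentially unlikely. Summing the tails gives a rate `exp (-c * m)`, which beats `exp (-m ^ α)`
for every `α < 1`.
-/

section ExponentialDecay

open Filter Topology Asymptotics

/-- Exponential decay of a real sequence, the rate being left unspecified. -/
def ExpDecay (a : ℕ → ℝ) : Prop :=
  ∃ c > 0, a =O[atTop] fun m : ℕ => Real.exp (-(c * m))

namespace ExpDecay

variable {a b : ℕ → ℝ}

lemma mono (hb : ExpDecay b) (ha : ∀ m, 0 ≤ a m) (hab : ∀ᶠ m in atTop, a m ≤ b m) :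
    ExpDecay a := by
  obtain ⟨c, hc, hbO⟩ := hb
  refine ⟨c, hc, (IsBigO.of_bound 1 ?_).trans hbO⟩
  filter_upwards [hab] with m hm
  rw [one_mul, Real.norm_of_nonneg (ha m)]
  exact hm.trans (le_abs_self _)

lemma add (ha : ExpDecay a) (hb : ExpDecay b) : ExpDecay fun m => a m + b m := by
  obtain ⟨c, hc, haO⟩ := ha
  obtain ⟨d, hd, hbO⟩ := hb
  have exp_isBigO : ∀ {e : ℝ}, min c d ≤ e →
      (fun m : ℕ => Real.exp (-(e * m))) =O[atTop] fun m : ℕ => Real.exp (-(min c d * m)) := by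
    intro e he
    refine IsBigO.of_bound 1 (Eventually.of_forall fun m => ?_)
    rw [one_mul, Real.norm_of_nonneg (Real.exp_pos _).le, Real.norm_of_nonneg (Real.exp_pos _).le]
    gcongr
  exact ⟨min c d, lt_min hc hd,
    (haO.trans (exp_isBigO (min_le_left c d))).add (hbO.trans (exp_isBigO (min_le_right c d)))⟩

lemma exists_le_mul_exp (ha : ExpDecay a) :
    ∃ C > 0, ∃ c > 0, ∀ m : ℕ, a m ≤ C * Real.exp (-(c * m)) := by
  obtain ⟨c, hc, haO⟩ := ha
  obtain ⟨C, hC, hbound⟩ := bound_of_isBigO_nat_atTop haO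
  refine ⟨C, hC, c, hc, fun m => (le_abs_self _).trans ?_⟩
  simpa only [Real.norm_eq_abs, Real.abs_exp] using hbound (Real.exp_ne_zero (-(c * m)))

lemma exists_le_mul_exp_neg_rpow (ha : ExpDecay a) {α : ℝ} (hα : α < 1) :
    ∃ C, ∀ m : ℕ, a m ≤ C * Real.exp (-(m : ℝ) ^ α) := by
  obtain ⟨c, hc, haO⟩ := ha
  have rpow_le : ∀ᶠ x : ℝ in atTop, x ^ α ≤ c * x := by
    filter_upwards [(tendsto_rpow_neg_atTop (sub_pos.2 hα)).eventually_le_const hc,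
      eventually_gt_atTop 0] with x hx hx0
    calc x ^ α = x ^ (-(1 - α)) * x := by
          rw [← Real.rpow_add_one hx0.ne']; congr 1; ring
      _ ≤ c * x := by gcongr
  have exp_isBigO : (fun m : ℕ => Real.exp (-(c * m))) =O[atTop]
      fun m : ℕ => Real.exp (-(m : ℝ) ^ α) := by
    refine IsBigO.of_bound 1 ?_
    filter_upwards [tendsto_natCast_atTop_atTop.eventually rpow_le] with m hm
    simpa using hm
  obtain ⟨C, -, hbound⟩ := bound_of_isBigO_nat_atTop (haO.trans exp_isBigO)
  refine ⟨C, fun m => (le_abs_self _).trans ?_⟩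
  simpa only [Real.norm_eq_abs, Real.abs_exp] using hbound (Real.exp_ne_zero (-(m : ℝ) ^ α))

lemma measureReal_iUnion_add {Ω : Type*} {mΩ : MeasurableSpace Ω} {P : Measure Ω}
    [IsFiniteMeasure P] {A : ℕ → Set Ω} (hA : ExpDecay fun m => P.real (A m)) :
    ExpDecay fun m => P.real (⋃ i, A (m + i)) := by
  obtain ⟨C, hC, c, hc, hbound⟩ := hA.exists_le_mul_exp
  set S : ℝ := (1 - Real.exp (-c))⁻¹
  have geometric : ∀ m : ℕ, HasSum (fun i : ℕ => C * Real.exp (-(c * m)) * Real.exp (-c) ^ i)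
      (C * Real.exp (-(c * m)) * S) := fun m =>
    (hasSum_geometric_of_lt_one (Real.exp_pos _).le
      (Real.exp_lt_one_iff.2 (neg_lt_zero.2 hc))).mul_left _
  have hS : 0 ≤ S := inv_nonneg.2 (sub_nonneg.2 (Real.exp_le_one_iff.2 (by linarith)))
  have term_le : ∀ m i : ℕ, P.real (A (m + i)) ≤ C * Real.exp (-(c * m)) * Real.exp (-c) ^ i := by
    intro m i
    refine (hbound (m + i)).trans_eq ?_
    rw [← Real.exp_nat_mul, mul_assoc, ← Real.exp_add]
    push_cast
    ring_nf
  refine ⟨c, hc, IsBigO.of_bound (C * S) (Eventually.of_forall fun m => ?_)⟩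
  rw [Real.norm_of_nonneg measureReal_nonneg, Real.norm_of_nonneg (Real.exp_pos _).le,
    mul_right_comm]
  refine ENNReal.toReal_le_of_le_ofReal (by positivity) ((measure_iUnion_le _).trans ?_)
  rw [← (geometric m).tsum_eq,
    ENNReal.ofReal_tsum_of_nonneg (fun i => by positivity) (geometric m).summable]
  refine ENNReal.tsum_le_tsum fun i => ?_
  rw [← ofReal_measureReal]
  exact ENNReal.ofReal_le_ofReal (term_le m i)

end ExpDecay

lemma isBigO_pow_of_succ_le_mul_add {a : ℕ → ℝ} {ρ R D : ℝ} (ha : ∀ m, 0 ≤ a m) (hρ : 0 ≤ ρ)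
    (hρR : ρ < R) (hR : 1 ≤ R) (hrec : ∀ᶠ m in atTop, a (m + 1) ≤ ρ * a m + D) :
    a =O[atTop] fun m => R ^ m := by
  obtain ⟨m₀, hm₀⟩ := eventually_atTop.1 hrec
  have hpow : ∀ m : ℕ, 0 < R ^ m := fun m => pow_pos (one_pos.trans_le hR) m
  set C : ℝ := max (a m₀ / R ^ m₀) (D / (R - ρ))
  have hC : 0 ≤ C := (div_nonneg (ha m₀) (hpow m₀).le).trans (le_max_left _ _)
  have hD : D ≤ C * (R - ρ) := (div_le_iff₀ (sub_pos.2 hρR)).1 (le_max_right _ _)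
  have bound : ∀ m ≥ m₀, a m ≤ C * R ^ m := by
    intro m hm
    induction m, hm using Nat.le_induction with
    | base => exact (div_le_iff₀ (hpow m₀)).1 (le_max_left _ _)
    | succ m hm ih =>
      have hgap : C * (R - ρ) ≤ C * (R - ρ) * R ^ m :=
        le_mul_of_one_le_right (mul_nonneg hC (sub_nonneg.2 hρR.le)) (one_le_pow₀ hR)
      calc a (m + 1) ≤ ρ * a m + D := hm₀ m hm
        _ ≤ ρ * (C * R ^ m) + C * (R - ρ) * R ^ m := by gcongr; exact hD.trans hgap
        _ = C * R ^ (m + 1) := by ring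
  refine IsBigO.of_bound C (eventually_atTop.2 ⟨m₀, fun m hm => ?_⟩)
  rw [Real.norm_of_nonneg (ha m), Real.norm_of_nonneg (hpow m).le]
  exact bound m hm

end ExponentialDecay

section ExponentialConvergence

open Filter Topology Set

/-- Convergence in probability of `x m` to the constant `q` at an exponential rate: each
deviation event has exponentially small probability, at a rate that may depend on the deviation. -/
def TendstoExpFast {Ω E : Type*} [PseudoMetricSpace E] {_ : MeasurableSpace Ω} (P : Measure Ω)
    (x : ℕ → Ω → E) (q : E) : Prop :=
  ∀ ε > 0, ExpDecay fun m => P.real {ω | ε ≤ dist (x m ω) q}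

namespace TendstoExpFast

variable {Ω E E' : Type*} [PseudoMetricSpace E] [PseudoMetricSpace E'] {mΩ : MeasurableSpace Ω}
  {P : Measure Ω} {x : ℕ → Ω → E} {q : E}

lemma of_forall_eq (h : ∀ m ω, x m ω = q) : TendstoExpFast P x q := by
  intro ε hε
  have no_deviation : ∀ m, {ω | ε ≤ dist (x m ω) q} = ∅ := fun m =>
    eq_empty_of_forall_notMem fun ω => by simp [h, hε]
  simp only [no_deviation, measureReal_empty]
  exact ⟨1, one_pos, Asymptotics.isBigO_zero _ _⟩

lemma comp_continuousWithinAt [IsFiniteMeasure P] (hx : TendstoExpFast P x q) {S : Set E}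
    {g : E → E'} (hg : ContinuousWithinAt g S q) (hxS : ∀ᶠ m in atTop, ∀ ω, x m ω ∈ S) :
    TendstoExpFast P (fun m ω => g (x m ω)) (g q) := by
  intro ε hε
  obtain ⟨δ, hδ, hgδ⟩ := Metric.continuousWithinAt_iff.1 hg ε hε
  refine (hx δ hδ).mono (fun m => measureReal_nonneg) ?_
  filter_upwards [hxS] with m hm
  refine measureReal_mono fun ω (hω : ε ≤ dist (g (x m ω)) (g q)) => ?_
  exact not_lt.1 fun hlt => hω.not_gt (hgδ (hm ω) hlt)

lemma expDecay_one_sub_measureReal_forall_ge [IsProbabilityMeasure P] (hx : TendstoExpFast P x q)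
    {ε : ℝ} (hε : 0 < ε) :
    ExpDecay fun m => 1 - P.real {ω | ∀ m' ≥ m, dist (x m' ω) q < ε} := by
  refine (hx ε hε).measureReal_iUnion_add.mono (fun m => sub_nonneg.2 measureReal_le_one)
    (Eventually.of_forall fun m => ?_)
  have cover : univ ⊆ {ω | ∀ m' ≥ m, dist (x m' ω) q < ε} ∪
      ⋃ i, {ω | ε ≤ dist (x (m + i) ω) q} := by
    intro ω _
    by_contra! h
    simp only [mem_union, mem_iUnion, mem_ofPred_eq, not_or, not_exists, not_le] at h
    exact h.1 fun m' hm' => by simpa only [Nat.add_sub_cancel' hm'] using h.2 (m' - m)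
  have union_bound := (measureReal_mono (μ := P) cover).trans (measureReal_union_le _ _)
  rw [probReal_univ] at union_bound
  linarith

end TendstoExpFast

end ExponentialConvergence

section Drift

open Filter Topology

variable {Ω : Type*} {𝒢 mΩ : MeasurableSpace Ω} {P : Measure Ω}

lemma condExp_exp_le [IsFiniteMeasure P] (h𝒢 : 𝒢 ≤ mΩ) {D : Ω → ℝ} {K : ℝ}
    (hD : AEStronglyMeasurable D P) (hDK : ∀ᵐ ω ∂P, |D ω| ≤ K) (hK : K ≤ 1) :
    P[fun ω => Real.exp (D ω) | 𝒢] ≤ᵐ[P] fun ω => 1 + P[D | 𝒢] ω + K ^ 2 := by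
  have exp_le : ∀ᵐ ω ∂P, Real.exp (D ω) ≤ (1 + K ^ 2) + D ω := by
    filter_upwards [hDK] with ω hω
    have taylor := (abs_le.1 (Real.abs_exp_sub_one_sub_id_le (hω.trans hK))).2
    have sq_le : D ω ^ 2 ≤ K ^ 2 := sq_le_sq' (abs_le.1 hω).1 (abs_le.1 hω).2
    linarith
  have hDint : Integrable D P := .of_bound hD K hDK
  have hexp : Integrable (fun ω => Real.exp (D ω)) P := by
    refine .of_bound (Real.continuous_exp.comp_aestronglyMeasurable hD) (Real.exp K) ?_
    filter_upwards [hDK] with ω hω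
    rw [Real.norm_eq_abs, Real.abs_exp]
    exact Real.exp_le_exp.2 ((le_abs_self _).trans hω)
  have hconst : Integrable (fun _ : Ω => 1 + K ^ 2) P := integrable_const _
  filter_upwards [condExp_mono (m := 𝒢) hexp (hconst.add hDint) exp_le,
    condExp_add hconst hDint 𝒢] with ω hle hadd
  rw [hadd, Pi.add_apply, condExp_const h𝒢] at hle
  linarith

lemma integrable_exp_mul_of_le [IsFiniteMeasure P] {Z : Ω → ℝ} {l M : ℝ}
    (hZ : AEStronglyMeasurable Z P) (hl : 0 ≤ l) (hZM : ∀ᵐ ω ∂P, Z ω ≤ M) :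
    Integrable (fun ω => Real.exp (l * Z ω)) P := by
  refine .of_bound (Real.continuous_exp.comp_aestronglyMeasurable (hZ.const_mul l))
    (Real.exp (l * M)) ?_
  filter_upwards [hZM] with ω hω
  rw [Real.norm_eq_abs, Real.abs_exp]
  gcongr

lemma condExp_exp_mul_le [IsFiniteMeasure P] (h𝒢 : 𝒢 ≤ mΩ) {Z Z' : Ω → ℝ} {l K M : ℝ}
    (hZ : StronglyMeasurable[𝒢] Z) (hZ' : AEStronglyMeasurable Z' P) (hl : 0 ≤ l)
    (hlK : l * K ≤ 1) (hZM : ∀ᵐ ω ∂P, Z ω ≤ M) (hinc : ∀ᵐ ω ∂P, |Z' ω - Z ω| ≤ K) :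
    P[fun ω => Real.exp (l * Z' ω) | 𝒢] ≤ᵐ[P]
      fun ω => Real.exp (l * Z ω) * (1 + l * P[Z' - Z | 𝒢] ω + (l * K) ^ 2) := by
  have hZm := (hZ.mono h𝒢).aestronglyMeasurable (μ := P)
  have hD : AEStronglyMeasurable (l • (Z' - Z)) P := (hZ'.sub hZm).const_smul l
  have hDK : ∀ᵐ ω ∂P, |(l • (Z' - Z)) ω| ≤ l * K := by
    filter_upwards [hinc] with ω hω
    rw [Pi.smul_apply, smul_eq_mul, abs_mul, abs_of_nonneg hl]
    exact mul_le_mul_of_nonneg_left hω hl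
  have factor : (fun ω => Real.exp (l * Z' ω)) =
      (fun ω => Real.exp (l * Z ω)) * fun ω => Real.exp ((l • (Z' - Z)) ω) := by
    funext ω
    simp only [Pi.mul_apply, Pi.smul_apply, Pi.sub_apply, smul_eq_mul, ← Real.exp_add]
    ring_nf
  have hZ'M : ∀ᵐ ω ∂P, Z' ω ≤ M + K := by
    filter_upwards [hZM, hinc] with ω hω hω'
    linarith [le_abs_self (Z' ω - Z ω)]
  have hexp : Integrable (fun ω => Real.exp ((l • (Z' - Z)) ω)) P := by
    simpa only [one_mul] using integrable_exp_mul_of_le hD zero_le_one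
      (hDK.mono fun ω hω => (le_abs_self _).trans hω)
  have pull_out := condExp_mul_of_stronglyMeasurable_left (μ := P)
    (f := fun ω => Real.exp (l * Z ω)) (g := fun ω => Real.exp ((l • (Z' - Z)) ω))
    (Real.continuous_exp.comp_stronglyMeasurable (hZ.const_mul l))
    (factor ▸ integrable_exp_mul_of_le hZ' hl hZ'M)
    hexp
  rw [factor]
  filter_upwards [pull_out, condExp_exp_le h𝒢 hD hDK hlK, condExp_smul l (Z' - Z) 𝒢]
    with ω hpull hle hsmul
  rw [hpull, Pi.mul_apply]
  rw [hsmul] at hle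
  exact mul_le_mul_of_nonneg_left hle (Real.exp_pos _).le

/- Off `A`, the drift bound controls `exp (l * Z)` where `0 ≤ Z`, and `exp (l * Z) ≤ 1` elsewhere;
on `A` only the crude bounds on `Z` and on the increment are available. -/
lemma condExp_exp_mul_le_of_drift_le [IsFiniteMeasure P] (h𝒢 : 𝒢 ≤ mΩ) {Z Z' : Ω → ℝ} {A : Set Ω}
    {l K M δ τ : ℝ} (hZ : StronglyMeasurable[𝒢] Z) (hZ' : AEStronglyMeasurable Z' P)
    (hl : 0 ≤ l) (hlK : l * K ≤ 1) (hlτ : l * K ^ 2 ≤ τ)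
    (hZM : ∀ᵐ ω ∂P, Z ω ≤ M) (hinc : ∀ᵐ ω ∂P, |Z' ω - Z ω| ≤ K)
    (hdrift : ∀ᵐ ω ∂P, ω ∉ A → 0 ≤ Z ω → P[Z' - Z | 𝒢] ω ≤ δ) :
    P[fun ω => Real.exp (l * Z' ω) | 𝒢] ≤ᵐ[P] fun ω =>
      (Real.exp (l * (δ + τ)) * Real.exp (l * Z ω) + 3)
        + A.indicator (fun _ => 3 * Real.exp (l * M)) ω := by
  filter_upwards [condExp_exp_mul_le h𝒢 hZ hZ' hl hlK hZM hinc, hZM, hinc,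
    ae_bdd_abs_condExp_of_ae_bdd_abs (m := 𝒢) hinc, hdrift] with ω hle hM hK hEK hδ
  refine hle.trans ?_
  have hv : 0 < Real.exp (l * Z ω) := Real.exp_pos _
  have hρv : 0 < Real.exp (l * (δ + τ)) * Real.exp (l * Z ω) := mul_pos (Real.exp_pos _) hv
  have growth_le_three : 1 + l * P[Z' - Z | 𝒢] ω + (l * K) ^ 2 ≤ 3 := by
    have hlK0 : 0 ≤ l * K := mul_nonneg hl ((abs_nonneg _).trans hK)
    have hlE : l * P[Z' - Z | 𝒢] ω ≤ l * K :=
      mul_le_mul_of_nonneg_left ((le_abs_self _).trans hEK) hl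
    linarith [pow_le_one₀ (n := 2) hlK0 hlK]
  have crude := mul_le_mul_of_nonneg_left growth_le_three hv.le
  by_cases hA : ω ∈ A
  · have hvM : Real.exp (l * Z ω) ≤ Real.exp (l * M) := by gcongr
    rw [Set.indicator_of_mem hA]
    linarith
  rw [Set.indicator_of_notMem hA]
  rcases le_or_gt 0 (Z ω) with hpos | hneg
  · have growth_le : 1 + l * P[Z' - Z | 𝒢] ω + (l * K) ^ 2 ≤ Real.exp (l * (δ + τ)) :=
      calc 1 + l * P[Z' - Z | 𝒢] ω + (l * K) ^ 2
          = 1 + l * P[Z' - Z | 𝒢] ω + l * (l * K ^ 2) := by ring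
        _ ≤ 1 + l * δ + l * τ := by gcongr; exact hδ hA hpos
        _ = l * (δ + τ) + 1 := by ring
        _ ≤ Real.exp (l * (δ + τ)) := Real.add_one_le_exp _
    linarith [mul_le_mul_of_nonneg_left growth_le hv.le]
  · have hv1 : Real.exp (l * Z ω) ≤ 1 :=
      Real.exp_le_one_iff.2 (mul_nonpos_of_nonneg_of_nonpos hl hneg.le)
    linarith

lemma mgf_le_of_drift_le [IsProbabilityMeasure P] (h𝒢 : 𝒢 ≤ mΩ) {Z Z' : Ω → ℝ} {A : Set Ω}
    {l K M δ τ : ℝ} (hZ : StronglyMeasurable[𝒢] Z) (hZ' : AEStronglyMeasurable Z' P)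
    (hl : 0 ≤ l) (hlK : l * K ≤ 1) (hlτ : l * K ^ 2 ≤ τ)
    (hZM : ∀ᵐ ω ∂P, Z ω ≤ M) (hinc : ∀ᵐ ω ∂P, |Z' ω - Z ω| ≤ K)
    (hdrift : ∀ᵐ ω ∂P, ω ∉ A → 0 ≤ Z ω → P[Z' - Z | 𝒢] ω ≤ δ) :
    ProbabilityTheory.mgf Z' P l ≤ Real.exp (l * (δ + τ)) * ProbabilityTheory.mgf Z P l
      + 3 + 3 * Real.exp (l * M) * P.real A := by
  set ρ := Real.exp (l * (δ + τ))
  set A' := toMeasurable P A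
  have hρv : Integrable (fun ω => ρ * Real.exp (l * Z ω)) P :=
    (integrable_exp_mul_of_le (hZ.mono h𝒢).aestronglyMeasurable hl hZM).const_mul ρ
  have hρv3 : Integrable (fun ω => ρ * Real.exp (l * Z ω) + 3) P := hρv.add (integrable_const 3)
  have hA' : Integrable (A'.indicator fun _ => 3 * Real.exp (l * M)) P :=
    (integrable_const _).indicator (measurableSet_toMeasurable P A)
  have hdrift' : ∀ᵐ ω ∂P, ω ∉ A' → 0 ≤ Z ω → P[Z' - Z | 𝒢] ω ≤ δ :=
    hdrift.mono fun ω hω h => hω fun hA => h (subset_toMeasurable P A hA)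
  calc ProbabilityTheory.mgf Z' P l = ∫ ω, P[fun ω => Real.exp (l * Z' ω) | 𝒢] ω ∂P :=
        (integral_condExp h𝒢).symm
    _ ≤ ∫ ω, ((ρ * Real.exp (l * Z ω) + 3) + A'.indicator (fun _ => 3 * Real.exp (l * M)) ω) ∂P :=
        integral_mono_ae integrable_condExp (hρv3.add hA')
          (condExp_exp_mul_le_of_drift_le h𝒢 hZ hZ' hl hlK hlτ hZM hinc hdrift')
    _ = ρ * ProbabilityTheory.mgf Z P l + 3 + 3 * Real.exp (l * M) * P.real A := by
        rw [integral_add hρv3 hA', integral_add hρv (integrable_const 3), integral_const_mul,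
          integral_indicator_const _ (measurableSet_toMeasurable P A), integral_const,
          measureReal_def P A', measure_toMeasurable, ← measureReal_def, probReal_univ,
          smul_eq_mul, smul_eq_mul, one_mul, mul_comm (P.real A)]
        rfl

lemma isBigO_mgf_of_drift_le [IsProbabilityMeasure P] {ℱ : Filtration ℕ mΩ} {Z : ℕ → Ω → ℝ}
    {A : ℕ → Set Ω} {l K L δ τ C c : ℝ} (hZ : StronglyAdapted ℱ Z) (hl : 0 < l) (hδ : 0 ≤ δ)
    (hτ : 0 < τ) (hlK : l * K ≤ 1) (hlτ : l * K ^ 2 ≤ τ) (hlL : l * L ≤ c) (hC : 0 ≤ C)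
    (hZL : ∀ᶠ m : ℕ in atTop, ∀ᵐ ω ∂P, Z m ω ≤ L * m)
    (hinc : ∀ᶠ m in atTop, ∀ᵐ ω ∂P, |Z (m + 1) ω - Z m ω| ≤ K)
    (hA : ∀ m : ℕ, P.real (A m) ≤ C * Real.exp (-(c * m)))
    (hdrift : ∀ᶠ m in atTop, ∀ᵐ ω ∂P,
      ω ∉ A m → 0 ≤ Z m ω → P[Z (m + 1) - Z m | ℱ m] ω ≤ δ) :
    (fun m => ProbabilityTheory.mgf (Z m) P l) =O[atTop]
      fun m => Real.exp (l * (δ + 2 * τ)) ^ m := by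
  refine isBigO_pow_of_succ_le_mul_add (ρ := Real.exp (l * (δ + τ))) (D := 3 + 3 * C)
    (fun m => ProbabilityTheory.mgf_nonneg) (Real.exp_pos _).le ?_ (Real.one_le_exp ?_) ?_
  · gcongr
    linarith
  · positivity
  filter_upwards [hZL, hinc, hdrift] with m hZLm hincm hdriftm
  have step := mgf_le_of_drift_le (ℱ.le m) (hZ m)
    ((hZ (m + 1)).mono (ℱ.le _)).aestronglyMeasurable hl.le hlK hlτ hZLm hincm hdriftm
  have bad_le : 3 * Real.exp (l * (L * m)) * P.real (A m) ≤ 3 * C :=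
    calc 3 * Real.exp (l * (L * m)) * P.real (A m)
        ≤ 3 * Real.exp (l * (L * m)) * (C * Real.exp (-(c * m))) := by gcongr; exact hA m
      _ = 3 * C * Real.exp ((l * L - c) * m) := by
        rw [mul_mul_mul_comm, ← Real.exp_add]; ring_nf
      _ ≤ 3 * C * 1 := by
        gcongr
        exact Real.exp_le_one_iff.2
          (mul_nonpos_of_nonpos_of_nonneg (sub_nonpos.2 hlL) m.cast_nonneg)
      _ = 3 * C := mul_one _
  linarith

theorem expDecay_measureReal_mul_le_of_drift_le [IsProbabilityMeasure P] {ℱ : Filtration ℕ mΩ}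
    {Z : ℕ → Ω → ℝ} {A : ℕ → Set Ω} {K L δ ε : ℝ} (hZ : StronglyAdapted ℱ Z) (hδ : 0 ≤ δ)
    (hδε : δ < ε) (hZL : ∀ᶠ m : ℕ in atTop, ∀ᵐ ω ∂P, Z m ω ≤ L * m)
    (hinc : ∀ᶠ m in atTop, ∀ᵐ ω ∂P, |Z (m + 1) ω - Z m ω| ≤ K)
    (hA : ExpDecay fun m => P.real (A m))
    (hdrift : ∀ᶠ m in atTop, ∀ᵐ ω ∂P,
      ω ∉ A m → 0 ≤ Z m ω → P[Z (m + 1) - Z m | ℱ m] ω ≤ δ) :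
    ExpDecay fun m => P.real {ω | ε * m ≤ Z m ω} := by
  obtain ⟨C, hC, c, hc, hAle⟩ := hA.exists_le_mul_exp
  set τ : ℝ := (ε - δ) / 3 with hτ_def
  have hτ : 0 < τ := by simp only [hτ_def]; linarith
  have small : ∀ a b : ℝ, 0 < b → ∀ᶠ l : ℝ in 𝓝[>] 0, l * a ≤ b := fun a b hb =>
    (((continuous_mul_const a).tendsto' 0 0 (zero_mul a)).eventually_le_const hb).filter_mono
      nhdsWithin_le_nhds
  obtain ⟨l, hl, hlK, hlτ, hlL⟩ := ((eventually_mem_nhdsWithin (a := (0 : ℝ)) (s := Set.Ioi 0)).and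
    ((small K 1 one_pos).and ((small (K ^ 2) τ hτ).and (small L c hc)))).exists
  have hl : 0 < l := hl
  refine ⟨l * τ, by positivity, ?_⟩
  have mgf_isBigO :=
    isBigO_mgf_of_drift_le hZ hl hδ hτ hlK hlτ hlL hC.le hZL hinc hAle hdrift
  have chernoff : ∀ᶠ m : ℕ in atTop, P.real {ω | ε * m ≤ Z m ω} ≤
      Real.exp (-l * (ε * m)) * ProbabilityTheory.mgf (Z m) P l := by
    filter_upwards [hZL] with m hm
    exact ProbabilityTheory.measure_ge_le_exp_mul_mgf _ hl.le
      (integrable_exp_mul_of_le ((hZ m).mono (ℱ.le m)).aestronglyMeasurable hl.le hm)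
  have rate : ∀ m : ℕ, Real.exp (-l * (ε * m)) * Real.exp (l * (δ + 2 * τ)) ^ m =
      Real.exp (-(l * τ * m)) := by
    intro m
    rw [← Real.exp_nat_mul, ← Real.exp_add, hτ_def]
    ring_nf
  refine (Asymptotics.IsBigO.of_bound 1 ?_).trans
    (((Asymptotics.isBigO_refl (fun m : ℕ => Real.exp (-l * (ε * m))) atTop).mul
      mgf_isBigO).congr_right rate)
  filter_upwards [chernoff] with m hm
  rw [one_mul, Real.norm_of_nonneg measureReal_nonneg]
  exact hm.trans (le_abs_self _)

end Drift

section StochasticApproximation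

open Filter Topology Set

lemma mul_sub_nonneg_of_monotoneOn {s : Set ℝ} {h : ℝ → ℝ} {σ x q : ℝ} (hh : MonotoneOn h s)
    (hx : x ∈ s) (hq : q ∈ s) (hσ : |σ| = 1) (hpos : 0 ≤ σ * (x - q)) : 0 ≤ σ * (h x - h q) := by
  rcases eq_or_eq_neg_of_abs_eq hσ with rfl | rfl
  · linarith [hh hq hx (by linarith)]
  · linarith [hh hx hq (by linarith)]

lemma condExp_signed_centered_le_dist {Ω : Type*} {𝒢 mΩ : MeasurableSpace Ω} {P : Measure Ω}
    [IsFiniteMeasure P] (h𝒢 : 𝒢 ≤ mΩ) {D ξ x : Ω → ℝ} {s : Set ℝ} {h : ℝ → ℝ} {γ q σ : ℝ}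
    (hD : Integrable D P) (hDξ : P[D | 𝒢] =ᵐ[P] fun ω => ξ ω - h (x ω))
    (hh : MonotoneOn h s) (hx : ∀ ω, x ω ∈ s) (hq : q ∈ s) (hσ : |σ| = 1) :
    ∀ᵐ ω ∂P, 0 ≤ σ * (x ω - q) →
      P[σ • (D - fun _ => γ - h q) | 𝒢] ω ≤ dist (ξ ω) γ := by
  filter_upwards [condExp_smul (μ := P) σ (D - fun _ => γ - h q) 𝒢,
    condExp_sub (μ := P) hD (integrable_const (γ - h q)) 𝒢, hDξ] with ω hsmul hsub hDω hpos
  rw [hsmul, Pi.smul_apply, hsub, Pi.sub_apply, condExp_const h𝒢, hDω, smul_eq_mul]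
  calc σ * (ξ ω - h (x ω) - (γ - h q))
      = σ * (ξ ω - γ) - σ * (h (x ω) - h q) := by ring
    _ ≤ σ * (ξ ω - γ) := sub_le_self _ (mul_sub_nonneg_of_monotoneOn hh (hx ω) hq hσ hpos)
    _ ≤ |σ * (ξ ω - γ)| := le_abs_self _
    _ = dist (ξ ω) γ := by rw [abs_mul, hσ, one_mul, Real.dist_eq]

variable {Ω : Type*} {mΩ : MeasurableSpace Ω} {P : Measure Ω} [IsProbabilityMeasure P]
  {ℱ : Filtration ℕ mΩ} {X ξ : ℕ → Ω → ℝ} {h : ℝ → ℝ} {N K γ q : ℝ}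

lemma expDecay_signed_deviation_of_drift (hN : 0 < N) (hX : StronglyAdapted ℱ X)
    (hXN : ∀ (m : ℕ) ω, X m ω ∈ Icc 0 (N * m))
    (hinc : ∀ᶠ m in atTop, ∀ᵐ ω ∂P, |X (m + 1) ω - X m ω| ≤ K)
    (hξ : TendstoExpFast P ξ γ) (hh : MonotoneOn h (Icc 0 1)) (hq : q ∈ Icc (0 : ℝ) 1)
    (hfix : γ - h q = N * q)
    (hdrift : ∀ᶠ m : ℕ in atTop,
      P[X (m + 1) - X m | ℱ m] =ᵐ[P] fun ω => ξ m ω - h (X m ω / (N * m)))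
    {σ : ℝ} (hσ : |σ| = 1) {ε : ℝ} (hε : 0 < ε) :
    ExpDecay fun m => P.real {ω | ε * m ≤ σ * (X m ω - N * m * q)} := by
  have increment : ∀ m, (fun ω => σ * (X (m + 1) ω - N * (m + 1 : ℕ) * q)) -
      (fun ω => σ * (X m ω - N * m * q)) = σ • (X (m + 1) - X m - fun _ => γ - h q) := by
    intro m
    funext ω
    simp only [Pi.sub_apply, Pi.smul_apply, smul_eq_mul, hfix]
    push_cast
    ring
  have hXm : ∀ m, AEStronglyMeasurable (X m) P := fun m =>
    ((hX m).mono (ℱ.le m)).aestronglyMeasurable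
  have upper_bound : ∀ (m : ℕ) ω, σ * (X m ω - N * m * q) ≤ N * m := by
    intro m ω
    have hNm : 0 ≤ N * m := by positivity
    refine (le_abs_self _).trans ?_
    rw [abs_mul, hσ, one_mul]
    exact abs_sub_le_of_nonneg_of_le (hXN m ω).1 (hXN m ω).2 (mul_nonneg hNm hq.1)
      (mul_le_of_le_one_right hNm hq.2)
  refine expDecay_measureReal_mul_le_of_drift_le (ℱ := ℱ) (K := K + N)
    (A := fun m => {ω | ε / 2 ≤ dist (ξ m ω) γ})
    (fun m => ((hX m).sub stronglyMeasurable_const).const_mul σ) (half_pos hε).le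
    (half_lt_self hε) (.of_forall fun m => ae_of_all P (upper_bound m)) ?_
    (hξ _ (half_pos hε)) ?_
  · filter_upwards [hinc] with m hm
    filter_upwards [hm] with ω hω
    refine (congrArg abs (congrFun (increment m) ω)).trans_le ?_
    rw [Pi.smul_apply, smul_eq_mul, abs_mul, hσ, one_mul, hfix]
    refine (abs_sub _ _).trans (add_le_add hω ?_)
    rw [abs_of_nonneg (mul_nonneg hN.le hq.1)]
    exact mul_le_of_le_one_right hN.le hq.2
  · filter_upwards [hinc, hdrift, eventually_gt_atTop 0] with m hincm hdriftm hm
    have hNm : 0 < N * m := by positivity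
    filter_upwards [condExp_signed_centered_le_dist (γ := γ) (ℱ.le m)
      (.of_bound ((hXm (m + 1)).sub (hXm m)) K hincm) hdriftm hh
      (fun ω => unitInterval.div_mem (hXN m ω).1 hNm.le (hXN m ω).2) hq hσ]
      with ω hle hωA hpos
    rw [increment]
    refine (hle ?_).trans (not_le.1 hωA).le
    have center : σ * (X m ω / (N * m) - q) = σ * (X m ω - N * m * q) / (N * m) := by
      field_simp
    exact center ▸ div_nonneg hpos hNm.le

theorem TendstoExpFast.div_of_drift (hN : 0 < N) (hX : StronglyAdapted ℱ X)
    (hXN : ∀ (m : ℕ) ω, X m ω ∈ Icc 0 (N * m))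
    (hinc : ∀ᶠ m in atTop, ∀ᵐ ω ∂P, |X (m + 1) ω - X m ω| ≤ K)
    (hξ : TendstoExpFast P ξ γ) (hh : MonotoneOn h (Icc 0 1)) (hq : q ∈ Icc (0 : ℝ) 1)
    (hfix : γ - h q = N * q)
    (hdrift : ∀ᶠ m : ℕ in atTop,
      P[X (m + 1) - X m | ℱ m] =ᵐ[P] fun ω => ξ m ω - h (X m ω / (N * m))) :
    TendstoExpFast P (fun m ω => X m ω / (N * m)) q := by
  intro ε hε
  have deviation := fun {σ : ℝ} (hσ : |σ| = 1) =>
    expDecay_signed_deviation_of_drift hN hX hXN hinc hξ hh hq hfix hdrift hσ (mul_pos hN hε)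
  refine ((deviation (σ := 1) (by simp)).add (deviation (σ := -1) (by simp))).mono
    (fun m => measureReal_nonneg) ?_
  filter_upwards [eventually_gt_atTop 0] with m hm
  refine (measureReal_mono fun ω hω => ?_).trans (measureReal_union_le _ _)
  have hNm : 0 < N * m := by positivity
  have center : N * m * (X m ω / (N * m) - q) = X m ω - N * m * q := by
    rw [mul_sub, mul_div_cancel₀ _ hNm.ne']
  have hω : ε ≤ |X m ω / (N * m) - q| := hω
  rcases le_abs.1 hω with h | h <;>
    have h := mul_le_mul_of_nonneg_left h hNm.le
  · left
    change N * ε * m ≤ 1 * (X m ω - N * m * q)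
    linarith
  · right
    change N * ε * m ≤ -1 * (X m ω - N * m * q)
    linarith

end StochasticApproximation

section FiniteConditionalLaw

variable {Ω β : Type*} {𝒢 mΩ : MeasurableSpace Ω} {P : Measure Ω} [MeasurableSpace β]
  [MeasurableSingletonClass β] {X : Ω → β} {s : Finset β}

lemma ae_mem_of_sum_condExp_indicator_eq_one [IsProbabilityMeasure P] (h𝒢 : 𝒢 ≤ mΩ)
    (hX : Measurable X)
    (hsum : ∀ᵐ ω ∂P, ∑ b ∈ s, P[(X ⁻¹' {b}).indicator (fun _ => (1 : ℝ)) | 𝒢] ω = 1) :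
    ∀ᵐ ω ∂P, X ω ∈ s := by
  have hfiber : ∀ b, MeasurableSet (X ⁻¹' {b}) := fun b => hX (measurableSet_singleton b)
  have full : P.real (X ⁻¹' s) = 1 :=
    calc P.real (X ⁻¹' s) = ∑ b ∈ s, P.real (X ⁻¹' {b}) :=
          (sum_measureReal_preimage_singleton s fun b _ => hfiber b).symm
      _ = ∑ b ∈ s, ∫ ω, P[(X ⁻¹' {b}).indicator (fun _ => (1 : ℝ)) | 𝒢] ω ∂P := by
          refine Finset.sum_congr rfl fun b _ => ?_
          rw [integral_condExp h𝒢, integral_indicator_const _ (hfiber b), smul_eq_mul, mul_one]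
      _ = ∫ _, (1 : ℝ) ∂P := by
          rw [← integral_finsetSum _ fun b _ => integrable_condExp, integral_congr_ae hsum]
      _ = 1 := by rw [integral_const, probReal_univ, one_smul]
  rw [measureReal_def, ENNReal.toReal_eq_one_iff] at full
  exact mem_ae_iff_prob_eq_one (hX s.measurableSet) |>.2 full

lemma condExp_comp_of_ae_mem [IsFiniteMeasure P] (hX : Measurable X) (hs : ∀ᵐ ω ∂P, X ω ∈ s)
    (h : β → ℝ) :
    P[h ∘ X | 𝒢] =ᵐ[P] fun ω =>
      ∑ b ∈ s, h b * P[(X ⁻¹' {b}).indicator (fun _ => (1 : ℝ)) | 𝒢] ω := by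
  classical
  have decomposition : h ∘ X =ᵐ[P]
      ∑ b ∈ s, h b • (X ⁻¹' {b}).indicator (fun _ => (1 : ℝ)) := by
    filter_upwards [hs] with ω hω
    simp [Finset.sum_apply, Set.indicator_apply, hω]
  have linear := condExp_finsetSum (μ := P) (m := 𝒢) (s := s)
    (f := fun b => h b • (X ⁻¹' {b}).indicator fun _ => (1 : ℝ)) fun b _ =>
      ((integrable_const 1).indicator (hX (measurableSet_singleton b))).smul (h b)
  have homogeneous : ∀ᵐ ω ∂P, ∀ b ∈ s,
      P[h b • (X ⁻¹' {b}).indicator (fun _ => (1 : ℝ)) | 𝒢] ω =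
        h b * P[(X ⁻¹' {b}).indicator (fun _ => (1 : ℝ)) | 𝒢] ω :=
    (ae_ball_iff s.countable_toSet).2 fun b _ => condExp_smul (h b) _ 𝒢
  filter_upwards [condExp_congr_ae (m := 𝒢) decomposition, linear, homogeneous]
    with ω hcongr hlin hhom
  rw [hcongr, hlin, Finset.sum_apply]
  exact Finset.sum_congr rfl hhom

end FiniteConditionalLaw

section IncrementLaw

open Filter Set

variable {Ω : Type*} {𝒢 mΩ : MeasurableSpace Ω} {P : Measure Ω} {k : ℕ} {D : Ω → ℤ} {u v : Ω → ℝ}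

/-- The conditional law given `𝒢` of the increment of the sum of the degrees that are at most `k`:
the new vertex always contributes `1`, and the vertex it attaches to contributes `0` if its degree
exceeds `k`, `-k` if its degree equals `k`, and `1` if its degree is below `k`. Here `u` and `v` are
the conditional probabilities that this degree is at most `k` and below `k`. -/
structure IncrementLaw (P : Measure Ω) (𝒢 : MeasurableSpace Ω) (k : ℕ) (D : Ω → ℤ)
    (u v : Ω → ℝ) : Prop where
  one : ∀ᵐ ω ∂P, P[{ω | D ω = 1}.indicator (fun _ => (1 : ℝ)) | 𝒢] ω = 1 - u ω
  one_sub : ∀ᵐ ω ∂P, P[{ω | D ω = 1 - (k : ℤ)}.indicator (fun _ => (1 : ℝ)) | 𝒢] ω = u ω - v ω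
  two : ∀ᵐ ω ∂P, P[{ω | D ω = 2}.indicator (fun _ => (1 : ℝ)) | 𝒢] ω = v ω

namespace IncrementLaw

lemma ae_sum_condExp_eq (hlaw : IncrementLaw P 𝒢 k D u v) (hk : k ≠ 0) (g : ℤ → ℝ) :
    ∀ᵐ ω ∂P, ∑ b ∈ {1, 1 - (k : ℤ), 2},
        g b * P[(D ⁻¹' {b}).indicator (fun _ => (1 : ℝ)) | 𝒢] ω =
      g 1 * (1 - u ω) + g (1 - k) * (u ω - v ω) + g 2 * v ω := by
  filter_upwards [hlaw.one, hlaw.one_sub, hlaw.two] with ω h1 hk' h2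
  rw [Finset.sum_insert (by simp; omega), Finset.sum_insert (by simp; omega),
    Finset.sum_singleton, ← add_assoc]
  exact congrArg₂ (· + ·) (congrArg₂ (· + ·) (congrArg (g 1 * ·) h1)
    (congrArg (g (1 - k) * ·) hk')) (congrArg (g 2 * ·) h2)

variable [IsProbabilityMeasure P]

lemma ae_mem (hlaw : IncrementLaw P 𝒢 k D u v) (h𝒢 : 𝒢 ≤ mΩ) (hD : Measurable D) (hk : k ≠ 0) :
    ∀ᵐ ω ∂P, D ω ∈ ({1, 1 - (k : ℤ), 2} : Finset ℤ) := by
  refine ae_mem_of_sum_condExp_indicator_eq_one h𝒢 hD ?_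
  filter_upwards [hlaw.ae_sum_condExp_eq hk 1] with ω hω
  simp only [Pi.one_apply, one_mul] at hω
  rw [hω]
  ring

lemma ae_abs_le (hlaw : IncrementLaw P 𝒢 k D u v) (h𝒢 : 𝒢 ≤ mΩ) (hD : Measurable D)
    (hk : k ≠ 0) : ∀ᵐ ω ∂P, |(D ω : ℝ)| ≤ k + 1 := by
  filter_upwards [hlaw.ae_mem h𝒢 hD hk] with ω hω
  simp only [Finset.mem_insert, Finset.mem_singleton] at hω
  have : |D ω| ≤ k + 1 := abs_le.2 (by omega)
  exact_mod_cast this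

lemma condExp_eq (hlaw : IncrementLaw P 𝒢 k D u v) (h𝒢 : 𝒢 ≤ mΩ) (hD : Measurable D)
    (hk : k ≠ 0) :
    P[fun ω => (D ω : ℝ) | 𝒢] =ᵐ[P] fun ω => 1 + (k + 1) * v ω - k * u ω := by
  filter_upwards [condExp_comp_of_ae_mem (𝒢 := 𝒢) hD (hlaw.ae_mem h𝒢 hD hk) Int.cast,
    hlaw.ae_sum_condExp_eq hk Int.cast] with ω hmean hsum
  refine hmean.trans (hsum.trans ?_)
  push_cast
  ring

end IncrementLaw

lemma measurable_of_measurable_intCast (hD : Measurable fun ω => (D ω : ℝ)) :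
    Measurable D :=
  Int.isClosedEmbedding_coe_real.measurableEmbedding.measurable_comp_iff.1 hD

theorem TendstoExpFast.div_of_incrementLaw [IsProbabilityMeasure P] {ℱ : Filtration ℕ mΩ}
    {X : ℕ → Ω → ℤ} {y : ℕ → Ω → ℝ} {φ : ℝ → ℝ} {q q' : ℝ} (hk : k ≠ 0)
    (hX : Adapted ℱ fun m ω => (X m ω : ℝ))
    (hXmem : ∀ (m : ℕ) ω, X m ω ∈ Icc (0 : ℤ) (2 * m))
    (hlaw : ∀ m ≥ 1, IncrementLaw P (ℱ m) k (fun ω => X (m + 1) ω - X m ω)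
      (fun ω => φ (X m ω / (2 * m))) fun ω => φ (y m ω))
    (hφcont : ContinuousOn φ (Icc 0 1)) (hφmono : MonotoneOn φ (Icc 0 1))
    (hy : TendstoExpFast P y q') (hymem : ∀ m ω, y m ω ∈ Icc (0 : ℝ) 1)
    (hq' : q' ∈ Icc (0 : ℝ) 1) (hq : q ∈ Icc (0 : ℝ) 1)
    (hfix : (k + 1) * φ q' - k * φ q - 2 * q + 1 = 0) :
    TendstoExpFast P (fun m ω => (X m ω : ℝ) / (2 * m)) q := by
  have hXR : ∀ (m : ℕ) ω, (X m ω : ℝ) ∈ Icc (0 : ℝ) (2 * m) := fun m ω =>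
    ⟨by exact_mod_cast (hXmem m ω).1, by exact_mod_cast (hXmem m ω).2⟩
  have hXmeas : ∀ m, Measurable (X m) := fun m =>
    measurable_of_measurable_intCast ((hX m).mono (ℱ.le m) le_rfl)
  have hξ : TendstoExpFast P (fun m ω => 1 + (k + 1) * φ (y m ω)) (1 + (k + 1) * φ q') :=
    hy.comp_continuousWithinAt (g := fun x => 1 + (k + 1) * φ x)
      (continuousWithinAt_const.add (continuousWithinAt_const.mul (hφcont _ hq')))
      (.of_forall hymem)
  have hmono : MonotoneOn (fun x => k * φ x) (Icc 0 1) := fun a ha b hb hab =>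
    mul_le_mul_of_nonneg_left (hφmono ha hb hab) k.cast_nonneg
  refine .div_of_drift (ℱ := ℱ) (K := k + 1) two_pos (fun m => (hX m).stronglyMeasurable) hXR ?_
    hξ hmono hq (by linarith) ?_
  · filter_upwards [eventually_ge_atTop 1] with m hm
    simpa only [Int.cast_sub] using
      (hlaw m hm).ae_abs_le (ℱ.le m) ((hXmeas (m + 1)).sub (hXmeas m)) hk
  · filter_upwards [eventually_ge_atTop 1] with m hm
    have hmean := (hlaw m hm).condExp_eq (ℱ.le m) ((hXmeas (m + 1)).sub (hXmeas m)) hk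
    simp only [Int.cast_sub] at hmean
    exact hmean

end IncrementLaw

section AttachmentProbability

open Set

variable (r s : ℕ)

lemma hasDerivAt_B (x : ℝ) :
    HasDerivAt (B r s) (s * r.choose s * x ^ (r - s) * (1 - x) ^ (s - 1)) x := by
  induction s with
  | zero =>
    have B_zero : B r 0 = fun _ => 0 := by simp [funext_iff, B]
    simpa [B_zero] using hasDerivAt_const x (0 : ℝ)
  | succ s ih =>
    have B_succ : B r (s + 1) =
        B r s + fun y : ℝ => (r.choose s : ℝ) * y ^ (r - s) * (1 - y) ^ s := by
      funext y
      exact Finset.sum_range_succ _ s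
    have hpow : HasDerivAt (fun y : ℝ => (1 - y) ^ s) (s * (1 - x) ^ (s - 1) * -1) x := by
      simpa only [id] using ((hasDerivAt_id x).const_sub 1).fun_pow s
    have hchoose : (r.choose (s + 1) : ℝ) * (s + 1) = r.choose s * (r - s : ℕ) := by
      exact_mod_cast Nat.choose_succ_right_eq r s
    rw [B_succ]
    have hterm := ((hasDerivAt_pow (r - s) x).const_mul (r.choose s : ℝ)).mul hpow
    refine (ih.add hterm).congr_deriv ?_
    rw [Nat.sub_sub, Nat.add_sub_cancel]
    push_cast
    linear_combination -(x ^ (r - (s + 1)) * (1 - x) ^ s) * hchoose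

lemma continuous_B : Continuous (B r s) := by
  unfold B
  fun_prop

lemma monotoneOn_B : MonotoneOn (B r s) (Icc 0 1) := by
  refine monotoneOn_of_deriv_nonneg (convex_Icc 0 1) (continuous_B r s).continuousOn
    (fun x _ => (hasDerivAt_B r s x).differentiableAt.differentiableWithinAt) fun x hx => ?_
  rw [interior_Icc] at hx
  rw [(hasDerivAt_B r s x).deriv]
  have hx0 : 0 ≤ x := hx.1.le
  have hx1 : 0 ≤ 1 - x := sub_nonneg.2 hx.2.le
  positivity

end AttachmentProbability

theorem stmt_19_general {φ : ℝ → ℝ} (hφcont : ContinuousOn φ (Set.Icc 0 1))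
    (hφmono : MonotoneOn φ (Set.Icc 0 1)) {p : ℕ → ℝ} (hp0 : p 0 = 0)
    (hp : ∀ k : ℕ, p (k + 1) ∈ Set.Icc (0 : ℝ) 1 ∧ ((k + 1 : ℕ) + 1 : ℝ) * φ (p k)
      - (k + 1 : ℕ) * φ (p (k + 1)) - 2 * p (k + 1) + 1 = 0)
    {Ω : Type*} {mΩ : MeasurableSpace Ω} {P : Measure Ω} [IsProbabilityMeasure P]
    {ℱ : Filtration ℕ mΩ} {F : ℕ → ℕ → Ω → ℤ}
    (hadapted : ∀ k, Adapted ℱ fun m ω => (F m k ω : ℝ)) (hF0 : ∀ m ω, F m 0 ω = 0)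
    (hFmem : ∀ (m k : ℕ) ω, F m k ω ∈ Set.Icc (0 : ℤ) (2 * m))
    (hlaw : ∀ m ≥ 1, ∀ k, IncrementLaw P (ℱ m) (k + 1)
      (fun ω => F (m + 1) (k + 1) ω - F m (k + 1) ω)
      (fun ω => φ (F m (k + 1) ω / (2 * m))) fun ω => φ (F m k ω / (2 * m)))
    {ε : ℝ} (hε : 0 < ε) (k : ℕ) :
    ExpDecay fun m =>
      1 - P.real {ω | ∀ m' ≥ m, |(F m' k ω : ℝ) / (2 * m') - p k| < ε} := by
  have ratio_mem : ∀ k (m : ℕ) ω, (F m k ω : ℝ) / (2 * m) ∈ Set.Icc (0 : ℝ) 1 := fun k m ω =>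
    unitInterval.div_mem (by exact_mod_cast (hFmem m k ω).1) (by positivity)
      (by exact_mod_cast (hFmem m k ω).2)
  have hpmem : ∀ k, p k ∈ Set.Icc (0 : ℝ) 1
    | 0 => hp0.symm ▸ Set.left_mem_Icc.2 zero_le_one
    | k + 1 => (hp k).1
  suffices convergence : ∀ k, TendstoExpFast P (fun m ω => (F m k ω : ℝ) / (2 * m)) (p k) from
    (convergence k).expDecay_one_sub_measureReal_forall_ge hε
  intro k
  induction k with
  | zero => exact .of_forall_eq fun m ω => by simp [hF0, hp0]
  | succ k ih =>
    exact .div_of_incrementLaw k.succ_ne_zero (hadapted (k + 1)) (fun m => hFmem m (k + 1))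
      (fun m hm => hlaw m hm k) hφcont hφmono ih (ratio_mem k) (hpmem k) (hp k).1 (hp k).2

/-- Convergence of the degree distribution (Theorem 3 of the paper), stated for any
adapted integer-valued process `F` with the transition law of Lemma 1: given `ℱ_m`,
the increment `F_{m+1}(k) - F_m(k)` equals `1` with probability
`1 - B_{r,s}(F_m(k)/2m)`, equals `1 - k` with probability
`B_{r,s}(F_m(k)/2m) - B_{r,s}(F_m(k-1)/2m)`, and equals `2` with probability
`B_{r,s}(F_m(k-1)/2m)`. Then for every `ε > 0`, `k ≥ 0` and `α < 1`, there is a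
constant `C` with `P(|F_{m'}(k)/2m' - p_k| < ε for all m' ≥ m) ≥ 1 - C·exp(-m^α)`
for all `m ≥ 1`. -/
theorem stmt_19 (r s : ℕ) (hs : 1 ≤ s) (hrs : s ≤ r)
    (p : ℕ → ℝ) (hp0 : p 0 = 0)
    (hp : ∀ k, 1 ≤ k → p k ∈ Set.Ioo (0 : ℝ) 1 ∧ f r s k (p k) (p (k - 1)) = 0)
    {Ω : Type*} {mΩ : MeasurableSpace Ω} (P : Measure Ω) [IsProbabilityMeasure P]
    (ℱ : Filtration ℕ mΩ)
    (F : ℕ → ℕ → Ω → ℤ)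
    (hadapted : ∀ k : ℕ, Adapted ℱ (fun m ω => ((F m k ω : ℤ) : ℝ)))
    (hF0 : ∀ m ω, F m 0 ω = 0)
    (hFnonneg : ∀ m k ω, 0 ≤ F m k ω)
    (hFmono : ∀ m k ω, F m k ω ≤ F m (k + 1) ω)
    (hFbound : ∀ m k ω, F m k ω ≤ 2 * m)
    (hcond1 : ∀ m : ℕ, 1 ≤ m → ∀ k : ℕ, 1 ≤ k → ∀ᵐ ω ∂P,
      (P[Set.indicator {ω' | F (m + 1) k ω' - F m k ω' = 1} (fun _ => (1 : ℝ)) | ℱ m]) ω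
        = 1 - B r s ((F m k ω : ℝ) / (2 * m)))
    (hcond2 : ∀ m : ℕ, 1 ≤ m → ∀ k : ℕ, 1 ≤ k → ∀ᵐ ω ∂P,
      (P[Set.indicator {ω' | F (m + 1) k ω' - F m k ω' = 1 - (k : ℤ)} (fun _ => (1 : ℝ)) | ℱ m]) ω
        = B r s ((F m k ω : ℝ) / (2 * m)) - B r s ((F m (k - 1) ω : ℝ) / (2 * m)))
    (hcond3 : ∀ m : ℕ, 1 ≤ m → ∀ k : ℕ, 1 ≤ k → ∀ᵐ ω ∂P,
      (P[Set.indicator {ω' | F (m + 1) k ω' - F m k ω' = 2} (fun _ => (1 : ℝ)) | ℱ m]) ω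
        = B r s ((F m (k - 1) ω : ℝ) / (2 * m))) :
    ∀ ε : ℝ, 0 < ε → ∀ k : ℕ, ∀ α : ℝ, α < 1 →
      ∃ C : ℝ, ∀ m : ℕ, 1 ≤ m →
        1 - C * Real.exp (-(m : ℝ) ^ α)
          ≤ (P {ω | ∀ m' : ℕ, m ≤ m' →
              |(F m' k ω : ℝ) / (2 * m') - p k| < ε}).toReal := by
  intro ε hε k α hα
  obtain ⟨C, hC⟩ := (stmt_19_general (continuous_B r s).continuousOn (monotoneOn_B r s) hp0
    (fun k => ((hp (k + 1) k.succ_pos).imp_left fun h => Set.Ioo_subset_Icc_self h)) hadapted hF0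
    (fun m k ω => ⟨hFnonneg m k ω, hFbound m k ω⟩)
    (fun m hm k => ⟨hcond1 m hm (k + 1) k.succ_pos, hcond2 m hm (k + 1) k.succ_pos,
      hcond3 m hm (k + 1) k.succ_pos⟩) hε k).exists_le_mul_exp_neg_rpow hα
  exact ⟨C, fun m _ => sub_le_comm.1 (hC m)⟩
end
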